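/- For natural p ≥ 1 and n ≥ (p+1)k, the set Gen_p(n,k) of starting words whose greedy list exhausts C_n(p,k) has cardinality n - k + 1 - p. -/

import Mathlib

/-- Result of transposing positions `i` (a `1`) and `j` (a `0`). -/
def applyT (w : List Bool) (i j : ℕ) : List Bool := (w.set i false).set j true

/-- `(i, j)` is a homogeneous transposition for `w`. -/
def okT (w : List Bool) (i j : ℕ) : Prop :=
  i < w.length ∧ j < w.length ∧ w.getD i false = true ∧ w.getD j false = false ∧
    ∀ t, min i j < t → t < max i j → w.getD t false = false

/-- `L` is the list produced by the greedy Gray code algorithm for the set of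
words satisfying `P`, started at `α`: each step performs the homogeneous
transposition with leftmost possible `1` and then leftmost possible `0`
producing a word satisfying `P` not yet listed, and the process runs until
no further step is possible. -/
def IsGreedyList (P : List Bool → Prop) (α : List Bool) (L : List (List Bool)) : Prop :=
  L.head? = some α ∧ L.Nodup ∧ (∀ w ∈ L, P w) ∧
  (∀ m, m + 1 < L.length →
    ∃ i j, okT (L.getD m []) i j ∧ L.getD (m + 1) [] = applyT (L.getD m []) i j ∧
      ∀ i' j', okT (L.getD m []) i' j' → P (applyT (L.getD m []) i' j') →
        applyT (L.getD m []) i' j' ∉ L.take (m + 1) →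
        i < i' ∨ (i = i' ∧ j ≤ j')) ∧
  (∀ i j, okT (L.getD (L.length - 1) []) i j →
    P (applyT (L.getD (L.length - 1) []) i j) →
    applyT (L.getD (L.length - 1) []) i j ∈ L)

/-- `α` is a generator: the greedy list started at `α` exhausts the words satisfying `P`. -/
def IsGen (P : List Bool → Prop) (α : List Bool) : Prop :=
  P α ∧ ∃ L, IsGreedyList P α L ∧ ∀ w, P w → w ∈ L

def memC (n p k : ℕ) (w : List Bool) : Prop :=
  w.length = n ∧ w.count true = k ∧ ∀ u v : List Bool, w = u ++ v → p * u.count true ≤ u.count false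

/-! ### Model: words as decreasing lists of positions of ones -/

/-- `Valid p x c`: the decreasing list `c` of positions is below `x` and satisfies the bounds. -/
def Valid (p : ℕ) : ℕ → List ℕ → Prop
  | _, [] => True
  | x, y :: r => y < x ∧ (p + 1) * r.length + p ≤ y ∧ Valid p y r

/-- Greedy successor in the model. -/
def Nxt (p : ℕ) : ℕ → Set (List ℕ) → List ℕ → List ℕ → Prop
  | _, _, [], _ => False
  | x, V, y :: r, c' =>
    (∃ r', Nxt p y {s | y :: s ∈ V} r r' ∧ c' = y :: r') ∨
    ((¬ ∃ r', Nxt p y {s | y :: s ∈ V} r r') ∧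
      ∃ z, c' = z :: r ∧ (Valid p x (z :: r) ∧ z :: r ∉ V) ∧
        ∀ z', Valid p x (z' :: r) → z' :: r ∉ V → z ≤ z')

def Full (p x k : ℕ) : Set (List ℕ) := {c | Valid p x c ∧ c.length = k}

def RStep (p x : ℕ) (σ τ : Set (List ℕ) × List ℕ) : Prop :=
  Nxt p x σ.1 σ.2 τ.2 ∧ τ.1 = insert τ.2 σ.1

/-- A contiguous run of `k` ones with the last one at `e`. -/
def run : ℕ → ℕ → List ℕ
  | 0, _ => []
  | k + 1, e => e :: run k (e - 1)

/-- Generators in the model. -/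
def IsG (p : ℕ) : ℕ → List ℕ → Prop
  | _, [] => True
  | x, y :: r => y < x ∧ ((y = (p + 1) * r.length + p ∧ IsG p y r) ∨
      ((p + 1) * r.length + p < y ∧ r = run r.length (y - 1)))

def EE (p : ℕ) : ℕ → List ℕ
  | 0 => []
  | k + 1 => ((p + 1) * k + p) :: run k ((p + 1) * k + p - 2)

@[simp] theorem run_length (k e : ℕ) : (run k e).length = k := by
  induction k generalizing e with
  | zero => rfl
  | succ k ih => simp [run, ih]

@[simp] theorem EE_length (p k : ℕ) : (EE p k).length = k := by
  cases k <;> simp [EE]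

theorem Valid.mono {p x x' : ℕ} {c : List ℕ} (h : Valid p x c) (hx : x ≤ x') : Valid p x' c := by
  cases c with
  | nil => trivial
  | cons y r => exact ⟨lt_of_lt_of_le h.1 hx, h.2⟩

theorem run_valid {p : ℕ} (hp : 1 ≤ p) (k e x : ℕ) (hex : e < x) (he : (p + 1) * k ≤ e + 1) :
    Valid p x (run k e) := by
  induction k generalizing e x with
  | zero => trivial
  | succ k ih =>
    have h1 : (p + 1) * (k + 1) = (p + 1) * k + (p + 1) := by ring
    refine ⟨hex, ?_, ?_⟩
    · rw [run_length]; omega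
    · apply ih <;> omega

theorem IsG.valid {p : ℕ} (hp : 1 ≤ p) {x : ℕ} {c : List ℕ} (h : IsG p x c) : Valid p x c := by
  induction c generalizing x with
  | nil => trivial
  | cons y r ih =>
    obtain ⟨h1, h2 | h2⟩ := h
    · exact ⟨h1, h2.1.ge, ih h2.2⟩
    · refine ⟨h1, h2.1.le, ?_⟩
      rw [h2.2]
      apply run_valid hp <;> omega

theorem IsG_run {p : ℕ} (hp : 1 ≤ p) (k e x : ℕ) (hex : e < x) (he : (p + 1) * k ≤ e + 1) :
    IsG p x (run k e) := by
  induction k generalizing e x with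
  | zero => trivial
  | succ k ih =>
    have h1 : (p + 1) * (k + 1) = (p + 1) * k + (p + 1) := by ring
    refine ⟨hex, ?_⟩
    rw [run_length]
    rcases Nat.eq_or_lt_of_le (show (p + 1) * k + p ≤ e by omega) with h | h
    · left
      exact ⟨h.symm, ih _ _ (by omega) (by omega)⟩
    · right
      exact ⟨h, rfl⟩

theorem IsG_EE {p : ℕ} (hp : 1 ≤ p) (k x : ℕ) (hx : (p + 1) * k ≤ x) :
    IsG p x (EE p k) := by
  cases k with
  | zero => trivial
  | succ k =>
    have h1 : (p + 1) * (k + 1) = (p + 1) * k + (p + 1) := by ring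
    refine ⟨by omega, Or.inl ?_⟩
    rw [run_length]
    refine ⟨rfl, ?_⟩
    cases k with
    | zero => trivial
    | succ k =>
      have h1 : (p + 1) * (k + 1) = (p + 1) * k + (p + 1) := by ring
      apply IsG_run hp <;> omega

theorem run_ne {k e e' : ℕ} (hk : k ≠ 0) (h : e ≠ e') : run k e ≠ run k e' := by
  cases k with
  | zero => exact absurd rfl hk
  | succ k => simp [run, h]

theorem EE_ne {p k e : ℕ} (hp : 1 ≤ p) (hk : k ≠ 0) (h : (p + 1) * k ≤ e) : EE p k ≠ run k e := by
  cases k with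
  | zero => exact absurd rfl hk
  | succ k =>
    have h1 : (p + 1) * (k + 1) = (p + 1) * k + (p + 1) := by ring
    simp only [EE, run, ne_eq, List.cons.injEq, not_and]
    intro h2; omega

theorem nxt_valid {p x : ℕ} {V : Set (List ℕ)} {c c' : List ℕ} (hc : Valid p x c)
    (h : Nxt p x V c c') : Valid p x c' ∧ c'.length = c.length ∧ c' ∉ V := by
  induction c generalizing x V c' with
  | nil => exact absurd h (by simp [Nxt])
  | cons y r ih =>
    rcases h with ⟨r', h, rfl⟩ | ⟨_, z, rfl, h, _⟩
    · obtain ⟨h1, h2, h3⟩ := ih hc.2.2 h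
      refine ⟨⟨hc.1, ?_, h1⟩, by simp [h2], h3⟩
      rw [h2]; exact hc.2.1
    · exact ⟨h.1, rfl, h.2⟩

theorem no_nxt_full {p x k : ℕ} {V : Set (List ℕ)} {c : List ℕ} (hc : Valid p x c)
    (hl : c.length = k) (h : Full p x k ⊆ V) : ¬ ∃ d, Nxt p x V c d := by
  rintro ⟨d, hd⟩
  obtain ⟨h1, h2, h3⟩ := nxt_valid hc hd
  exact h3 (h ⟨h1, h2.trans hl⟩)

open Relation in
theorem rtg_mono {p x : ℕ} {σ τ : Set (List ℕ) × List ℕ} (h : ReflTransGen (RStep p x) σ τ) :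
    σ.1 ⊆ τ.1 := by
  induction h with
  | refl => exact subset_rfl
  | tail _ h2 ih => rw [h2.2]; exact ih.trans (Set.subset_insert _ _)

open Relation in
theorem lift_block {p x y : ℕ} {σ τ : Set (List ℕ) × List ℕ} (h : ReflTransGen (RStep p y) σ τ)
    (V : Set (List ℕ)) (hV : {s | y :: s ∈ V} = σ.1) :
    ReflTransGen (RStep p x) (V, y :: σ.2) (V ∪ {c | ∃ s ∈ τ.1, c = y :: s}, y :: τ.2) := by
  induction h with
  | refl =>
    have : V ∪ {c | ∃ s ∈ σ.1, c = y :: s} = V := by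
      rw [← hV]
      ext c
      simp only [Set.mem_union, Set.mem_ofPred_eq]
      constructor
      · rintro (h | ⟨s, hs, rfl⟩) <;> assumption
      · exact Or.inl
    rw [this]
  | @tail ρ τ h1 h2 ih =>
    refine ih.tail ⟨Or.inl ⟨τ.2, ?_, rfl⟩, ?_⟩
    · have : {s | y :: s ∈ V ∪ {c | ∃ s ∈ ρ.1, c = y :: s}} = ρ.1 := by
        have h3 := rtg_mono h1
        ext s
        constructor
        · rintro (h | ⟨s', hs, h⟩)
          · apply h3; rw [← hV]; exact h
          · simp only [List.cons.injEq, true_and] at h; rw [h]; exact hs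
        · intro hs; exact Or.inr ⟨s, hs, rfl⟩
      rw [this]; exact h2.1
    · rw [h2.2]
      ext c
      simp only [Set.mem_union, Set.mem_ofPred_eq, Set.mem_insert_iff]
      constructor
      · rintro (h | ⟨s, rfl | hs, rfl⟩)
        · exact Or.inr (Or.inl h)
        · exact Or.inl rfl
        · exact Or.inr (Or.inr ⟨s, hs, rfl⟩)
      · rintro (rfl | h | ⟨s, hs, rfl⟩)
        · exact Or.inr ⟨_, Or.inl rfl, rfl⟩
        · exact Or.inl h
        · exact Or.inr ⟨_, Or.inr hs, rfl⟩

/-- The inductive statement. -/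
def MainS (p j : ℕ) : Prop := ∀ x c, Valid p x c → c.length = j →
  ∃ V c', Relation.ReflTransGen (RStep p x) ({c}, c) (V, c') ∧ V ⊆ Full p x j ∧
    Valid p x c' ∧ c'.length = j ∧ (¬ ∃ d, Nxt p x V c' d) ∧
    (IsG p x c → V = Full p x j ∧ (c ≠ run j (x - 1) → c' = run j (x - 1)) ∧
      (c = run j (x - 1) → Even j → c' = EE p j) ∧
      (c = run j (x - 1) → Odd j → (p + 1) * j < x → c' = run j (x - 2))) ∧
    (¬ IsG p x c → V ≠ Full p x j ∧ c' = run j (x - 1))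

/-- words whose head lies in `[z, t]` -/
def Bl (p j z t : ℕ) : Set (List ℕ) :=
  {c | ∃ y s, c = y :: s ∧ z ≤ y ∧ y ≤ t ∧ Valid p y s ∧ s.length = j}

open Relation in
/-- exhausting one block -/
theorem block_gen {p j x y : ℕ} {r r' : List ℕ} {V W : Set (List ℕ)}
    (h : ReflTransGen (RStep p y) ({r}, r) (W, r')) (hW : W = Full p y j)
    (hV : ∀ s, y :: s ∈ V ↔ s = r) :
    ReflTransGen (RStep p x) (V, y :: r) (V ∪ Bl p j y y, y :: r') := by
  have := lift_block (x := x) h V (by ext s; simp [hV])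
  have h2 : {c | ∃ s ∈ W, c = y :: s} = Bl p j y y := by
    subst hW
    ext c
    constructor
    · rintro ⟨s, hs, rfl⟩
      exact ⟨y, s, rfl, le_rfl, le_rfl, hs.1, hs.2⟩
    · rintro ⟨y', s, rfl, h1, h2, h3, h4⟩
      obtain rfl : y' = y := by omega
      exact ⟨s, ⟨h3, h4⟩, rfl⟩
  rw [← h2]; exact this

open Relation in
theorem jump {p x y z : ℕ} {r : List ℕ} {V : Set (List ℕ)}
    (h1 : ¬ ∃ d, Nxt p y {s | y :: s ∈ V} r d)
    (h2 : Valid p x (z :: r)) (h3 : z :: r ∉ V)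
    (h4 : ∀ z', z' < z → (p + 1) * r.length + p ≤ z' → Valid p z' r → z' :: r ∈ V) :
    RStep p x (V, y :: r) (insert (z :: r) V, z :: r) := by
  refine ⟨Or.inr ⟨h1, z, rfl, ⟨h2, h3⟩, ?_⟩, rfl⟩
  intro z' hz' hn
  by_contra hlt
  exact hn (h4 z' (by omega) hz'.2.1 hz'.2.2)

theorem run_valid_lt {p j e y : ℕ} (hj : j ≠ 0) (h : Valid p y (run j e)) : e < y := by
  cases j with
  | zero => exact absurd rfl hj
  | succ k => exact h.1

open Relation in
theorem up_chain {p j x : ℕ} (hp : 1 ≤ p) (hM : MainS p j) (t : ℕ) (ht : t < x) (d : ℕ) :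
    ∀ (z : ℕ) (r : List ℕ) (V : Set (List ℕ)), z + d = t → (p + 1) * j + p ≤ z → IsG p z r →
      r.length = j → (r ≠ run j (z - 1) ∨ j = 0) →
      (∀ y s, z ≤ y → y ≤ t → (y :: s ∈ V ↔ y = z ∧ s = r)) →
      (j = 0 → ∀ y, (p + 1) * j + p ≤ y → y < z → [y] ∈ V) →
      ReflTransGen (RStep p x) (V, z :: r) (V ∪ Bl p j z t, t :: run j (t - 1)) := by
  induction d with
  | zero =>
    intro z r V hzt hz hr hl hg hV hH
    obtain rfl : z = t := by omega
    obtain ⟨W, r', h1, -, -, hl', -, h2, -⟩ := hM z r (hr.valid hp) hl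
    obtain ⟨h3, h4, -, -⟩ := h2 hr
    have hr' : r' = run j (z - 1) := by
      rcases hg with hg | rfl
      · exact h4 hg
      · exact List.length_eq_zero_iff.1 hl'
    subst hr'
    exact block_gen h1 h3 (fun s => by rw [hV z s le_rfl le_rfl]; simp)
  | succ d ih =>
    intro z r V hzt hz hr hl hg hV hH
    obtain ⟨W, r', h1, -, hv', hl', -, h2, -⟩ := hM z r (hr.valid hp) hl
    obtain ⟨h3, h4, -, -⟩ := h2 hr
    have hr' : r' = run j (z - 1) := by
      rcases hg with hg | rfl
      · exact h4 hg
      · exact List.length_eq_zero_iff.1 hl'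
    subst hr'
    have s1 := block_gen (x := x) h1 h3 (fun s => by rw [hV z s le_rfl (by omega)]; simp)
    have hmul : j = 0 → (p + 1) * j = 0 := by rintro rfl; rfl
    have s2 : RStep p x (V ∪ Bl p j z z, z :: run j (z - 1))
        (insert ((z + 1) :: run j (z - 1)) (V ∪ Bl p j z z), (z + 1) :: run j (z - 1)) := by
      apply jump
      · apply no_nxt_full hv' hl'
        intro s hs
        exact Or.inr ⟨z, s, rfl, le_rfl, le_rfl, hs.1, hs.2⟩
      · exact ⟨by omega, by rw [run_length]; omega, hv'.mono (by omega)⟩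
      · rintro (h | ⟨y, s, h, h5, h6, -⟩)
        · rw [hV _ _ (by omega) (by omega)] at h; omega
        · simp only [List.cons.injEq] at h; omega
      · intro z' hz' hb hvz
        rw [run_length] at hb
        rcases Nat.eq_or_lt_of_le (show z' ≤ z by omega) with h | h
        · subst h
          exact Or.inr ⟨z', _, rfl, le_rfl, le_rfl, hvz, by simp⟩
        · by_cases hj : j = 0
          · subst hj
            exact Or.inl (hH rfl z' hb h)
          · have := run_valid_lt hj hvz
            omega
    have s3 := ih (z + 1) (run j (z - 1)) (insert ((z + 1) :: run j (z - 1)) (V ∪ Bl p j z z))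
      (by omega) (by omega) (IsG_run hp _ _ _ (by omega) (by omega)) (by simp)
      (by
        by_cases hj : j = 0
        · exact Or.inr hj
        · exact Or.inl (run_ne hj (by omega)))
      (by
        intro y s hy1 hy2
        constructor
        · rintro (h | h | ⟨y', s', h, h5, h6, -⟩)
          · simpa using h
          · rw [hV _ _ (by omega) (by omega)] at h; omega
          · simp only [List.cons.injEq] at h; omega
        · rintro ⟨rfl, rfl⟩
          exact Or.inl rfl)
      (by
        intro hj y hb hy
        rcases Nat.eq_or_lt_of_le (show y ≤ z by omega) with h | h
        · subst h
          exact Or.inr (Or.inr ⟨y, [], rfl, le_rfl, le_rfl, trivial, hj.symm⟩)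
        · exact Or.inr (Or.inl (hH hj y hb h)))
    have := (s1.tail s2).trans s3
    convert this using 2
    ext c
    simp only [Set.mem_union, Set.mem_insert_iff]
    constructor
    · rintro (h | ⟨y, s, rfl, h5, h6, h7⟩)
      · exact Or.inl (Or.inr (Or.inl h))
      · rcases Nat.eq_or_lt_of_le h5 with h | h
        · exact Or.inl (Or.inr (Or.inr ⟨y, s, rfl, h5, h.ge, h7⟩))
        · exact Or.inr ⟨y, s, rfl, h, h6, h7⟩
    · rintro ((rfl | h | ⟨y, s, rfl, h5, h6, h7⟩) | ⟨y, s, rfl, h5, h6, h7⟩)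
      · exact Or.inr ⟨_, _, rfl, by omega, by omega, hv'.mono (by omega), hl'⟩
      · exact Or.inl h
      · exact Or.inr ⟨_, _, rfl, by omega, by omega, h7⟩
      · exact Or.inr ⟨_, _, rfl, by omega, by omega, h7⟩

open Relation in
theorem down_chain {p j x : ℕ} (hp : 1 ≤ p) (hM : MainS p j) (hj : Odd j) (d : ℕ) :
    ∀ (e : ℕ) (V : Set (List ℕ)), (p + 1) * j + p + d = e → e < x →
      (∀ y s, (p + 1) * j + p ≤ y → y ≤ e → (y :: s ∈ V ↔ y = e ∧ s = run j (e - 1))) →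
      ReflTransGen (RStep p x) (V, e :: run j (e - 1))
        (V ∪ Bl p j ((p + 1) * j + p) e, EE p (j + 1)) := by
  have hj0 : j ≠ 0 := by rintro rfl; simp at hj
  induction d with
  | zero =>
    intro e V he hex hV
    obtain rfl : (p + 1) * j + p = e := by omega
    have hG := IsG_run hp j ((p + 1) * j + p - 1) ((p + 1) * j + p) (by omega) (by omega)
    obtain ⟨W, r', h1, -, -, hl', -, h2, -⟩ := hM _ _ (hG.valid hp) (by simp)
    obtain ⟨h3, -, -, h4⟩ := h2 hG
    have hr' := h4 rfl hj (by omega)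
    subst hr'
    exact block_gen h1 h3 (fun s => by rw [hV _ s le_rfl le_rfl]; simp)
  | succ d ih =>
    intro e V he hex hV
    have hG := IsG_run hp j (e - 1) e (by omega) (by omega)
    obtain ⟨W, r', h1, -, hv', hl', -, h2, -⟩ := hM _ _ (hG.valid hp) (by simp)
    obtain ⟨h3, -, -, h4⟩ := h2 hG
    have hr' := h4 rfl hj (by omega)
    subst hr'
    have s1 := block_gen (x := x) h1 h3 (fun s => by rw [hV _ s (by omega) le_rfl]; simp)
    have hv2 : Valid p (e - 1) (run j (e - 2)) := run_valid hp _ _ _ (by omega) (by omega)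
    have s2 : RStep p x (V ∪ Bl p j e e, e :: run j (e - 2))
        (insert ((e - 1) :: run j (e - 2)) (V ∪ Bl p j e e), (e - 1) :: run j (e - 2)) := by
      apply jump
      · apply no_nxt_full hv' hl'
        intro s hs
        exact Or.inr ⟨e, s, rfl, le_rfl, le_rfl, hs.1, hs.2⟩
      · exact ⟨by omega, by rw [run_length]; omega, hv2⟩
      · rintro (h | ⟨y, s, h, h5, h6, -⟩)
        · rw [hV _ _ (by omega) (by omega)] at h; omega
        · simp only [List.cons.injEq] at h; omega
      · intro z' hz' hb hvz
        have := run_valid_lt hj0 hvz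
        omega
    have s3 := ih (e - 1) (insert ((e - 1) :: run j (e - 2)) (V ∪ Bl p j e e))
      (by omega) (by omega)
      (by
        intro y s hy1 hy2
        have h22 : e - 1 - 1 = e - 2 := by omega
        rw [h22]
        constructor
        · rintro (h | h | ⟨y', s', h, h5, h6, -⟩)
          · simpa using h
          · rw [hV _ _ (by omega) (by omega)] at h; omega
          · simp only [List.cons.injEq] at h; omega
        · rintro ⟨rfl, rfl⟩
          exact Or.inl rfl)
    have h22 : e - 1 - 1 = e - 2 := by omega
    rw [h22] at s3
    have := (s1.tail s2).trans s3
    convert this using 2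
    ext c
    simp only [Set.mem_union, Set.mem_insert_iff]
    constructor
    · rintro (h | ⟨y, s, rfl, h5, h6, h7⟩)
      · exact Or.inl (Or.inr (Or.inl h))
      · rcases Nat.eq_or_lt_of_le h6 with h | h
        · exact Or.inl (Or.inr (Or.inr ⟨y, s, rfl, h.ge, h6, h7⟩))
        · exact Or.inr ⟨y, s, rfl, h5, by omega, h7⟩
    · rintro ((rfl | h | ⟨y, s, rfl, h5, h6, h7⟩) | ⟨y, s, rfl, h5, h6, h7⟩)
      · exact Or.inr ⟨_, _, rfl, by omega, by omega, hv2, hl'⟩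
      · exact Or.inl h
      · exact Or.inr ⟨_, _, rfl, by omega, by omega, h7⟩
      · exact Or.inr ⟨_, _, rfl, by omega, by omega, h7⟩

theorem full_succ {p j x : ℕ} (hx : 0 < x) :
    Full p x (j + 1) = Bl p j ((p + 1) * j + p) (x - 1) := by
  ext c
  constructor
  · rintro ⟨h1, h2⟩
    cases c with
    | nil => simp at h2
    | cons y r =>
      have hl : r.length = j := by simpa using h2
      refine ⟨y, r, rfl, ?_, ?_, h1.2.2, hl⟩
      · rw [← hl]; exact h1.2.1
      · have := h1.1; omega
  · rintro ⟨y, s, rfl, h1, h2, h3, h4⟩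
    refine ⟨⟨by omega, by rw [h4]; exact h1, h3⟩, by simp [h4]⟩

theorem Bl_union {p j a b c : ℕ} (h1 : a ≤ b + 1) (h2 : b ≤ c) :
    Bl p j a b ∪ Bl p j (b + 1) c = Bl p j a c := by
  ext w
  constructor
  · rintro (⟨y, s, rfl, h5, h6, h7⟩ | ⟨y, s, rfl, h5, h6, h7⟩)
    · exact ⟨y, s, rfl, h5, by omega, h7⟩
    · exact ⟨y, s, rfl, by omega, h6, h7⟩
  · rintro ⟨y, s, rfl, h5, h6, h7⟩
    by_cases h : y ≤ b
    · exact Or.inl ⟨y, s, rfl, h5, h, h7⟩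
    · exact Or.inr ⟨y, s, rfl, by omega, h6, h7⟩

open Relation in
theorem final_up {p j x e y : ℕ} (hp : 1 ≤ p) (hM : MainS p j) {U : Set (List ℕ)} {r : List ℕ}
    (hx : e + 1 < x) (hye : y ≤ e) (hbe : (p + 1) * j + p ≤ e + 1)
    (hU : ∀ y s, y :: s ∈ U → y ≤ e)
    (hn : ¬ ∃ d, Nxt p y {s | y :: s ∈ U} r d) (hl : r.length = j)
    (hG : IsG p (e + 1) r) (hg : r ≠ run j e ∨ j = 0)
    (hc : ∀ z, z ≤ e → (p + 1) * j + p ≤ z → Valid p z r → z :: r ∈ U) :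
    ReflTransGen (RStep p x) (U, y :: r) (U ∪ Bl p j (e + 1) (x - 1), run (j + 1) (x - 1)) := by
  have s1 : RStep p x (U, y :: r) (insert ((e + 1) :: r) U, (e + 1) :: r) := by
    apply jump hn
    · exact ⟨hx, by rw [hl]; exact hbe, hG.valid hp⟩
    · intro h
      have := hU _ _ h
      omega
    · intro z hz hb hv
      exact hc z (by omega) (by rw [← hl]; exact hb) hv
  have s2 := up_chain hp hM (x - 1) (show x - 1 < x by omega) (x - 1 - (e + 1)) (e + 1) r
    (insert ((e + 1) :: r) U) (by omega) hbe hG hl hg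
    (by
      intro y' s h1 h2
      constructor
      · rintro (h | h)
        · simpa using h
        · have := hU _ _ h
          omega
      · rintro ⟨rfl, rfl⟩
        exact Or.inl rfl)
    (by
      rintro hj y' h1 h2
      have hr : r = [] := List.length_eq_zero_iff.1 (hl.trans hj)
      subst hr
      exact Or.inr (hc y' (by omega) h1 trivial))
  have := s2.head s1
  change ReflTransGen (RStep p x) (U, y :: r)
    (U ∪ Bl p j (e + 1) (x - 1), (x - 1) :: run j (x - 1 - 1))
  convert this using 2
  ext w
  constructor
  · rintro (h | h)
    · exact Or.inl (Or.inr h)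
    · exact Or.inr h
  · rintro ((rfl | h) | h)
    · exact Or.inr ⟨_, _, rfl, le_rfl, by omega, hG.valid hp, hl⟩
    · exact Or.inl h
    · exact Or.inr h

theorem main_zero (p : ℕ) : MainS p 0 := by
  intro x c _ hl
  obtain rfl : c = [] := List.length_eq_zero_iff.1 hl
  refine ⟨{[]}, [], Relation.ReflTransGen.refl, ?_, trivial, rfl, ?_, ?_, ?_⟩
  · rintro s rfl; exact ⟨trivial, rfl⟩
  · simp [Nxt]
  · intro _
    refine ⟨?_, fun _ => rfl, fun _ _ => rfl, fun _ _ _ => rfl⟩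
    ext s
    constructor
    · rintro rfl; exact ⟨trivial, rfl⟩
    · rintro ⟨_, h⟩; exact List.length_eq_zero_iff.1 h
  · intro h; exact absurd trivial h

open Relation in
/-- Generator case, from an exhausted range of blocks `[b, e]`. -/
theorem gen_finish {p j x e y : ℕ} {c r : List ℕ} (hp : 1 ≤ p) (hM : MainS p j)
    (hx : e < x) (hye : y ≤ e) (hby : (p + 1) * j + p ≤ y)
    (h : ReflTransGen (RStep p x) ({c}, c) (Bl p j ((p + 1) * j + p) e, y :: r))
    (hv : Valid p y r) (hl : r.length = j)
    (hG : IsG p (e + 1) r) (hg : r ≠ run j e ∨ j = 0) :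
    ∃ c', ReflTransGen (RStep p x) ({c}, c) (Full p x (j + 1), c') ∧
      Valid p x c' ∧ c'.length = j + 1 ∧ (e + 1 = x → c' = y :: r) ∧
      (e + 1 < x → c' = run (j + 1) (x - 1)) := by
  have hmul : (p + 1) * (j + 1) = (p + 1) * j + (p + 1) := by ring
  rcases Nat.eq_or_lt_of_le (show e + 1 ≤ x by omega) with hex | hex
  · refine ⟨y :: r, ?_, ⟨by omega, by rw [hl]; exact hby, hv⟩, by simp [hl], fun _ => rfl,
      by omega⟩
    rw [full_succ (by omega), show x - 1 = e by omega]
    exact h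
  · refine ⟨run (j + 1) (x - 1), ?_, run_valid hp _ _ _ (by omega) (by omega), by simp, by omega,
      fun _ => rfl⟩
    have := h.trans (final_up hp hM hex hye (by omega) (by
        rintro y' s ⟨y'', s', h1, h2, h3, h4⟩
        simp only [List.cons.injEq] at h1
        omega)
      (no_nxt_full hv hl (fun s hs => ⟨y, s, rfl, hby, hye, hs.1, hs.2⟩)) hl hG hg
      (fun z hz hb hvz => ⟨z, r, rfl, hb, hz, hvz, hl⟩))
    rw [Bl_union (by omega) (by omega)] at this
    rw [full_succ (by omega)]
    exact this

open Relation in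
theorem main_succ {p j : ℕ} (hp : 1 ≤ p) (hM : MainS p j) : MainS p (j + 1) := by
  intro x c hc hlc
  have hmul : (p + 1) * (j + 1) = (p + 1) * j + (p + 1) := by ring
  cases c with
  | nil => simp at hlc
  | cons e r =>
  have hl : r.length = j := by simpa using hlc
  obtain ⟨hex, hbe, hvr⟩ := hc
  rw [hl] at hbe
  have hsing : ∀ s, e :: s ∈ ({e :: r} : Set (List ℕ)) ↔ s = r := by intro s; simp
  have hbl : {e :: r} ∪ Bl p j e e = Bl p j e e := by
    rw [Set.union_eq_right]
    rintro s rfl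
    exact ⟨e, r, rfl, le_rfl, le_rfl, hvr, hl⟩
  by_cases hG : IsG p x (e :: r)
  · -- generators
    suffices hs : ∃ c', ReflTransGen (RStep p x) ({e :: r}, e :: r) (Full p x (j + 1), c') ∧
        Valid p x c' ∧ c'.length = j + 1 ∧
        ((e :: r ≠ run (j + 1) (x - 1) → c' = run (j + 1) (x - 1)) ∧
        (e :: r = run (j + 1) (x - 1) → Even (j + 1) → c' = EE p (j + 1)) ∧
        (e :: r = run (j + 1) (x - 1) → Odd (j + 1) → (p + 1) * (j + 1) < x →
          c' = run (j + 1) (x - 2))) by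
      obtain ⟨c', h1, h2, h3, h4⟩ := hs
      exact ⟨_, c', h1, subset_rfl, h2, h3, no_nxt_full h2 h3 subset_rfl,
        fun _ => ⟨rfl, h4⟩, fun h => absurd hG h⟩
    rcases hG.2 with ⟨heb, hGr⟩ | ⟨heb, hr⟩
    · rw [hl] at heb
      obtain ⟨W, r', h1, -, hv', hl', -, h2, -⟩ := hM e r hvr hl
      obtain ⟨h3, h4, h5, h6⟩ := h2 hGr
      have s1 := block_gen (x := x) h1 h3 hsing
      rw [hbl] at s1
      have hr' : IsG p (e + 1) r' ∧ (r' ≠ run j e ∨ j = 0) := by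
        by_cases hj0 : j = 0
        · have : r' = [] := List.length_eq_zero_iff.1 (hl'.trans hj0)
          subst this
          exact ⟨trivial, Or.inr hj0⟩
        · by_cases hr : r = run j (e - 1)
          · rcases Nat.even_or_odd j with hj | hj
            · rw [h5 hr hj]
              exact ⟨IsG_EE hp _ _ (by omega), Or.inl (EE_ne hp hj0 (by omega))⟩
            · rw [h6 hr hj (by omega)]
              have : 1 ≤ j := by omega
              have : p + 1 ≤ (p + 1) * j := Nat.le_mul_of_pos_right _ this
              exact ⟨IsG_run hp _ _ _ (by omega) (by omega), Or.inl (run_ne hj0 (by omega))⟩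
          · rw [h4 hr]
            exact ⟨IsG_run hp _ _ _ (by omega) (by omega), Or.inl (run_ne hj0 (by omega))⟩
      have s1' : ReflTransGen (RStep p x) ({e :: r}, e :: r)
          (Bl p j ((p + 1) * j + p) e, e :: r') := by rw [← heb]; exact s1
      obtain ⟨c', g1, g2, g3, g4, g5⟩ := gen_finish hp hM hex le_rfl heb.ge s1' hv' hl'
        hr'.1 hr'.2
      refine ⟨c', g1, g2, g3, ?_, ?_, ?_⟩
      · intro hne
        rcases Nat.eq_or_lt_of_le (show e + 1 ≤ x by omega) with hx | hx
        · rw [g4 hx, ← hx]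
          have : r ≠ run j (e - 1) := by
            rintro rfl
            apply hne
            rw [← hx]; rfl
          rw [h4 this]; rfl
        · exact g5 hx
      · intro heq hev
        simp only [run, List.cons.injEq] at heq
        have hodd : Odd j := by rwa [Nat.even_add_one, Nat.not_even_iff_odd] at hev
        rw [g4 (by omega), h6 (by rw [heq.2, heq.1]) hodd (by omega), heb]
        rfl
      · intro heq _ hlt
        simp only [run, List.cons.injEq] at heq
        omega
    · rw [hl] at heb hr
      subst hr
      rcases Nat.even_or_odd j with hj | hj
      · -- j even
        obtain ⟨W, r', h1, -, hv', hl', -, h2, -⟩ := hM e _ hvr hl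
        obtain ⟨h3, h4, h5, h6⟩ := h2 (IsG_run hp _ _ _ (by omega) (by omega))
        have s1 := block_gen (x := x) h1 h3 hsing
        rw [hbl] at s1
        have hr' := h5 rfl hj
        subst hr'
        have hGE : IsG p ((p + 1) * j + p) (EE p j) := IsG_EE hp _ _ (by omega)
        have s2 : RStep p x (Bl p j e e, e :: EE p j)
            (insert (((p + 1) * j + p) :: EE p j) (Bl p j e e), ((p + 1) * j + p) :: EE p j) := by
          apply jump
          · apply no_nxt_full hv' hl'
            intro s hs
            exact ⟨e, s, rfl, le_rfl, le_rfl, hs.1, hs.2⟩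
          · exact ⟨by omega, by simp, hGE.valid hp⟩
          · rintro ⟨y, s, h, h5, h6, -⟩
            simp only [List.cons.injEq] at h; omega
          · intro z' hz' hb hvz
            rw [EE_length] at hb
            omega
        have s3 := up_chain hp hM (e - 1) (show e - 1 < x by omega) (e - 1 - ((p + 1) * j + p))
          ((p + 1) * j + p) (EE p j) (insert (((p + 1) * j + p) :: EE p j) (Bl p j e e))
          (by omega) le_rfl hGE (by simp)
          (by
            by_cases hj0 : j = 0
            · exact Or.inr hj0
            · exact Or.inl (EE_ne hp hj0 (by omega)))
          (by
            intro y s hy1 hy2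
            constructor
            · rintro (h | ⟨y', s', h, h5, h6, -⟩)
              · simpa using h
              · simp only [List.cons.injEq] at h; omega
            · rintro ⟨rfl, rfl⟩
              exact Or.inl rfl)
          (by intro _ y h7 h8; omega)
        have s4 := (s1.tail s2).trans s3
        have hset : insert (((p + 1) * j + p) :: EE p j) (Bl p j e e) ∪
            Bl p j ((p + 1) * j + p) (e - 1) = Bl p j ((p + 1) * j + p) e := by
          have := Bl_union (p := p) (j := j) (a := (p + 1) * j + p) (b := e - 1) (c := e)
            (by omega) (by omega)
          rw [← this, show e - 1 + 1 = e by omega]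
          ext w
          constructor
          · rintro ((rfl | h) | h)
            · exact Or.inl ⟨_, _, rfl, le_rfl, by omega, hGE.valid hp, by simp⟩
            · exact Or.inr h
            · exact Or.inl h
          · rintro (h | h)
            · exact Or.inr h
            · exact Or.inl (Or.inr h)
        rw [hset] at s4
        obtain ⟨c', g1, g2, g3, g4, g5⟩ := gen_finish (y := e - 1) hp hM hex (by omega) (by omega)
          s4 (run_valid hp _ _ _ (by omega) (by omega)) (by simp)
          (IsG_run hp _ _ _ (by omega) (by omega))
          (by
            by_cases hj0 : j = 0
            · exact Or.inr hj0
            · exact Or.inl (run_ne hj0 (by omega)))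
        refine ⟨c', g1, g2, g3, ?_, ?_, ?_⟩
        · intro hne
          rcases Nat.eq_or_lt_of_le (show e + 1 ≤ x by omega) with hx | hx
          · exact absurd (by rw [← hx]; rfl) hne
          · exact g5 hx
        · intro _ hev
          rw [Nat.even_add_one] at hev
          exact absurd hj hev
        · intro heq _ _
          simp only [run, List.cons.injEq] at heq
          rw [g4 (by omega), show x - 2 = e - 1 by omega]
          rfl
      · -- j odd
        have hj0 : j ≠ 0 := by rintro rfl; simp at hj
        have s1 := down_chain (x := x) hp hM hj (e - ((p + 1) * j + p)) e {e :: run j (e - 1)}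
          (by omega) hex (by
            intro y s _ _
            simp)
        have hset : {e :: run j (e - 1)} ∪ Bl p j ((p + 1) * j + p) e =
            Bl p j ((p + 1) * j + p) e := by
          rw [Set.union_eq_right]
          rintro s rfl
          exact ⟨e, _, rfl, by omega, le_rfl, hvr, hl⟩
        rw [hset] at s1
        have : p + 1 ≤ (p + 1) * j := Nat.le_mul_of_pos_right _ (by omega)
        obtain ⟨c', g1, g2, g3, g4, g5⟩ := gen_finish (y := (p + 1) * j + p) hp hM hex (by omega)
          le_rfl s1 (run_valid hp _ _ _ (by omega) (by omega)) (by simp)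
          (IsG_run hp _ _ _ (by omega) (by omega)) (Or.inl (run_ne hj0 (by omega)))
        refine ⟨c', g1, g2, g3, ?_, ?_, ?_⟩
        · intro hne
          rcases Nat.eq_or_lt_of_le (show e + 1 ≤ x by omega) with hx | hx
          · exact absurd (by rw [← hx]; rfl) hne
          · exact g5 hx
        · intro heq _
          simp only [run, List.cons.injEq] at heq
          exact g4 (by omega)
        · intro _ hodd
          rw [Nat.odd_add_one] at hodd
          exact absurd hj hodd
  · -- non-generators
    have hj0 : j ≠ 0 := by
      rintro rfl
      have : r = [] := List.length_eq_zero_iff.1 hl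
      subst this
      apply hG
      refine ⟨hex, ?_⟩
      rcases Nat.eq_or_lt_of_le hbe with h | h
      · exact Or.inl ⟨h.symm, trivial⟩
      · exact Or.inr ⟨h, rfl⟩
    have key : ∃ W, ReflTransGen (RStep p e) ({r}, r) (W, run j (e - 1)) ∧ W ⊆ Full p e j ∧
        Valid p e (run j (e - 1)) ∧ (¬ ∃ d, Nxt p e W (run j (e - 1)) d) ∧
        ((p + 1) * j + p < e ∨ W ≠ Full p e j) := by
      obtain ⟨W, r', h1, hW, hv', hl', hn, h2, h3⟩ := hM e r hvr hl
      by_cases hGr : IsG p e r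
      · obtain ⟨h4, h5, -⟩ := h2 hGr
        have heb : (p + 1) * j + p < e := by
          rcases Nat.eq_or_lt_of_le hbe with h | h
          · exact absurd ⟨hex, Or.inl ⟨by rw [hl]; exact h.symm, hGr⟩⟩ hG
          · exact h
        have hr : r ≠ run j (e - 1) := by
          intro h
          exact hG ⟨hex, Or.inr ⟨by rw [hl]; exact heb, by rw [hl]; exact h⟩⟩
        have := h5 hr
        subst this
        exact ⟨W, h1, hW, hv', hn, Or.inl heb⟩
      · obtain ⟨h4, h5⟩ := h3 hGr
        subst h5
        exact ⟨W, h1, hW, hv', hn, Or.inr h4⟩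
    obtain ⟨W, h1, hW, hv', hn, hmiss⟩ := key
    have s1 := lift_block (x := x) h1 {e :: r} (by ext s; simp)
    set U : Set (List ℕ) := {e :: r} ∪ {c | ∃ s ∈ W, c = e :: s} with hUdef
    have hrW : r ∈ W := rtg_mono h1 rfl
    have hU : ∀ y s, y :: s ∈ U ↔ y = e ∧ s ∈ W := by
      intro y s
      constructor
      · rintro (h | ⟨s', hs', h⟩)
        · simp only [Set.mem_singleton_iff, List.cons.injEq] at h
          rw [h.1, h.2]; exact ⟨rfl, hrW⟩
        · simp only [List.cons.injEq] at h
          rw [h.1, h.2]; exact ⟨rfl, hs'⟩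
      · rintro ⟨rfl, h⟩
        exact Or.inr ⟨s, h, rfl⟩
    have hslice : {s | e :: s ∈ U} = W := by ext s; simp [hU]
    have hlast : run j (e - 1) ∈ W := by
      have h0 : (e :: r, e :: r) = (e :: r, e :: r) := rfl
      have : ∀ σ τ : Set (List ℕ) × List ℕ, ReflTransGen (RStep p e) σ τ → σ.2 ∈ σ.1 →
          τ.2 ∈ τ.1 := by
        intro σ τ h hσ
        induction h with
        | refl => exact hσ
        | tail _ h2 _ => rw [h2.2]; exact Or.inl rfl
      exact this _ _ h1 rfl
    -- something with head at most `e` is missing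
    obtain ⟨q, hq, hqU, hqh⟩ : ∃ q ∈ Full p x (j + 1), q ∉ U ∧ ∀ y s, q = y :: s → y ≤ e := by
      rcases hmiss with h | h
      · refine ⟨((p + 1) * j + p) :: run j ((p + 1) * j + p - 1), ⟨⟨by omega, by simp, ?_⟩,
          by simp⟩, ?_, ?_⟩
        · exact run_valid hp _ _ _ (by omega) (by omega)
        · rw [hU]; omega
        · intro y s hys
          simp only [List.cons.injEq] at hys
          omega
      · obtain ⟨s, hs, hsW⟩ : ∃ s ∈ Full p e j, s ∉ W := by
          by_contra hcon
          push Not at hcon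
          exact h (Set.Subset.antisymm hW hcon)
        refine ⟨e :: s, ⟨⟨hex, by rw [hs.2]; exact hbe, hs.1⟩, by simp [hs.2]⟩, ?_, ?_⟩
        · rw [hU]; exact fun h => hsW h.2
        · intro y s hys
          simp only [List.cons.injEq] at hys
          omega
    rcases Nat.eq_or_lt_of_le (show e + 1 ≤ x by omega) with hx | hx
    · have hxe : x - 1 = e := by omega
      refine ⟨U, run (j + 1) (x - 1), ?_, ?_, run_valid hp _ _ _ (by omega) (by omega), by simp,
        ?_, fun h => absurd h hG, fun _ => ⟨fun h => hqU (h ▸ hq), rfl⟩⟩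
      · rw [hxe]; exact s1
      · rintro (_ | ⟨y, s⟩) hw
        · rcases hw with h | ⟨s', _, h⟩
          · simp at h
          · simp at h
        · obtain ⟨rfl, hs⟩ := (hU _ _).1 hw
          have := hW hs
          exact ⟨⟨hex, by rw [this.2]; exact hbe, this.1⟩, by simp [this.2]⟩
      · rw [hxe]
        rintro ⟨d, ⟨r', h, -⟩ | ⟨-, z, -, ⟨hz, hzU⟩, -⟩⟩
        · rw [hslice] at h
          exact hn ⟨r', h⟩
        · have := run_valid_lt hj0 hz.2.2
          have h2 := hz.1
          apply hzU
          rw [hU]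
          exact ⟨by omega, hlast⟩
    · have s2 := final_up (y := e) hp hM hx le_rfl (by omega)
        (fun y s h => ((hU y s).1 h).1.le) (by rw [hslice]; exact hn) (by simp)
        (IsG_run hp j (e - 1) _ (by omega) (by omega)) (Or.inl (run_ne hj0 (by omega)))
        (by
          intro z hz hb hv
          have := run_valid_lt hj0 hv
          rw [hU]
          exact ⟨by omega, hlast⟩)
      refine ⟨_, _, s1.trans s2, ?_, run_valid hp _ _ _ (by omega) (by omega), by simp,
        ?_, fun h => absurd h hG, fun _ => ⟨?_, rfl⟩⟩
      · rintro w (hw | hw)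
        · rcases w with _ | ⟨y, s⟩
          · rcases hw with h | ⟨s', _, h⟩
            · simp at h
            · simp at h
          · obtain ⟨rfl, hs⟩ := (hU _ _).1 hw
            have := hW hs
            exact ⟨⟨hex, by rw [this.2]; exact hbe, this.1⟩, by simp [this.2]⟩
        · rw [full_succ (by omega)]
          obtain ⟨y, s, rfl, h5, h6, h7⟩ := hw
          exact ⟨y, s, rfl, by omega, h6, h7⟩
      · rintro ⟨d, ⟨r', h, -⟩ | ⟨-, z, -, ⟨hz, hzU⟩, -⟩⟩
        · refine no_nxt_full (k := j) (run_valid hp j _ _ (by omega) (by omega)) (by simp) ?_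
            ⟨r', h⟩
          intro s hs
          exact Or.inr ⟨x - 1, s, rfl, by omega, le_rfl, hs.1, hs.2⟩
        · have := run_valid_lt hj0 hz.2.2
          have h2 := hz.1
          apply hzU
          exact Or.inr ⟨z, _, rfl, by omega, by omega, hz.2.2, by simp⟩
      · intro h
        rw [← h] at hq
        rcases hq with h | ⟨y, s, hys, h5, -⟩
        · exact hqU h
        · have := hqh y s hys
          omega

theorem main_all {p : ℕ} (hp : 1 ≤ p) (j : ℕ) : MainS p j := by
  induction j with
  | zero => exact main_zero p
  | succ j ih => exact main_succ hp ih

/-! ### Translation to words -/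

theorem Valid.lt {p x : ℕ} {c : List ℕ} (h : Valid p x c) : ∀ t ∈ c, t < x := by
  induction c generalizing x with
  | nil => simp
  | cons y r ih =>
    intro t ht
    rcases List.mem_cons.1 ht with rfl | ht
    · exact h.1
    · exact (ih h.2.2 t ht).trans h.1

theorem Valid.ext {p x x' : ℕ} {c c' : List ℕ} (h : Valid p x c) (h' : Valid p x' c')
    (hm : ∀ t, t ∈ c ↔ t ∈ c') : c = c' := by
  induction c generalizing x x' c' with
  | nil =>
    cases c' with
    | nil => rfl
    | cons y r => exact absurd ((hm y).2 (by simp)) (by simp)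
  | cons y r ih =>
    cases c' with
    | nil => exact absurd ((hm y).1 (by simp)) (by simp)
    | cons y' r' =>
      have h1 := h.2.2.lt
      have h2 := h'.2.2.lt
      have hy : y = y' := by
        have h3 := (hm y).1 (by simp)
        have h4 := (hm y').2 (by simp)
        rw [List.mem_cons] at h3 h4
        rcases h3 with h3 | h3
        · exact h3
        · rcases h4 with h4 | h4
          · exact h4.symm
          · have := h1 _ h4
            have := h2 _ h3
            omega
      subst hy
      congr 1
      refine ih h.2.2 h'.2.2 ?_
      intro t
      have := hm t
      rw [List.mem_cons, List.mem_cons] at this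
      constructor
      · intro ht
        have hlt := h1 t ht
        rcases this.1 (Or.inr ht) with h | h
        · omega
        · exact h
      · intro ht
        have hlt := h2 t ht
        rcases this.2 (Or.inr ht) with h | h
        · omega
        · exact h

def Mv (x : ℕ) (c : List ℕ) (i j : ℕ) : Prop :=
  i ∈ c ∧ i < x ∧ j < x ∧ j ∉ c ∧ ∀ t, min i j < t → t < max i j → t ∉ c

def Res (c : List ℕ) (i j : ℕ) (d : List ℕ) : Prop := ∀ t, t ∈ d ↔ t = j ∨ (t ≠ i ∧ t ∈ c)

theorem mv_cases {p x y i j : ℕ} {r d : List ℕ} (hc : Valid p x (y :: r)) (hm : Mv x (y :: r) i j)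
    (hd : Valid p x d) (hr : Res (y :: r) i j d) :
    (i = y ∧ d = j :: r) ∨
      (i < y ∧ ∃ s, d = y :: s ∧ Mv y r i j ∧ Valid p y s ∧ Res r i j s) := by
  obtain ⟨h1, h2, h3, h4, h5⟩ := hm
  have hlt := hc.2.2.lt
  have hyr : y ∉ r := fun h => lt_irrefl _ (hlt y h)
  rw [List.mem_cons, not_or] at h4
  cases d with
  | nil => exact absurd ((hr j).2 (Or.inl rfl)) (by simp)
  | cons y' s =>
  have hlt' := hd.2.2.lt
  rcases List.mem_cons.1 h1 with rfl | hir
  · left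
    refine ⟨rfl, ?_⟩
    have hrj : ∀ t ∈ r, t < j := by
      intro t ht
      by_contra hcon
      have h6 : t ≠ j := by rintro rfl; exact h4.2 ht
      have h7 := hlt t ht
      exact h5 t (by omega) (by omega) (List.mem_cons_of_mem _ ht)
    have hy' : y' = j := by
      have h6 := (hr y').1 (by simp)
      have h7 := (hr j).2 (Or.inl rfl)
      rw [List.mem_cons] at h6 h7
      rcases h6 with h6 | ⟨h6, h8 | h8⟩
      · exact h6
      · exact absurd h8 h6
      · have := hrj _ h8
        rcases h7 with h7 | h7
        · omega
        · have := hlt' _ h7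
          omega
    subst hy'
    congr 1
    refine hd.2.2.ext hc.2.2 ?_
    intro t
    have h6 := hr t
    rw [List.mem_cons, List.mem_cons] at h6
    constructor
    · intro ht
      have := hlt' t ht
      rcases h6.1 (Or.inr ht) with h | ⟨h, h' | h'⟩
      · omega
      · exact absurd h' h
      · exact h'
    · intro ht
      have h7 := hlt t ht
      have := hrj t ht
      rcases h6.2 (Or.inr ⟨by omega, Or.inr ht⟩) with h | h
      · omega
      · exact h
  · right
    have hiy := hlt i hir
    have hjy : j < y := by
      by_contra hcon
      have : y ≠ j := fun h => h4.1 h.symm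
      exact h5 y (by omega) (by omega) (by simp)
    have hy' : y' = y := by
      have h6 := (hr y').1 (by simp)
      have h7 := (hr y).2 (Or.inr ⟨by omega, by simp⟩)
      rw [List.mem_cons] at h6 h7
      rcases h7 with h7 | h7
      · exact h7.symm
      · have := hlt' _ h7
        rcases h6 with h6 | ⟨-, h6 | h6⟩
        · omega
        · exact h6
        · have := hlt _ h6
          omega
    subst hy'
    refine ⟨hiy, s, rfl, ⟨hir, hiy, hjy, h4.2, ?_⟩, hd.2.2, ?_⟩
    · intro t ha hb hc
      exact h5 t ha hb (List.mem_cons_of_mem _ hc)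
    · intro t
      have h6 := hr t
      rw [List.mem_cons, List.mem_cons] at h6
      constructor
      · intro ht
        have := hlt' t ht
        rcases h6.1 (Or.inr ht) with h | ⟨h, h' | h'⟩
        · exact Or.inl h
        · omega
        · exact Or.inr ⟨h, h'⟩
      · rintro (rfl | ⟨ha, hb⟩)
        · rcases h6.2 (Or.inl rfl) with h | h
          · omega
          · exact h
        · have := hlt t hb
          rcases h6.2 (Or.inr ⟨ha, Or.inr hb⟩) with h | h
          · omega
          · exact h

theorem no_nxt_mv {p x : ℕ} {V : Set (List ℕ)} {c : List ℕ} (hc : Valid p x c)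
    (h : ¬ ∃ d, Nxt p x V c d) (i j : ℕ) (d : List ℕ) (hm : Mv x c i j) (hd : Valid p x d)
    (hr : Res c i j d) : d ∈ V := by
  induction c generalizing x V d with
  | nil => exact absurd hm.1 (by simp)
  | cons y r ih =>
    by_contra hdV
    by_cases hin : ∃ r', Nxt p y {s | y :: s ∈ V} r r'
    · obtain ⟨r', h'⟩ := hin
      exact h ⟨y :: r', Or.inl ⟨r', h', rfl⟩⟩
    · rcases mv_cases hc hm hd hr with ⟨rfl, rfl⟩ | ⟨_, s, rfl, h1, h2, h3⟩
      · classical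
        have hex : ∃ z, Valid p x (z :: r) ∧ z :: r ∉ V := ⟨j, hd, hdV⟩
        exact h ⟨Nat.find hex :: r, Or.inr ⟨hin, Nat.find hex, rfl, Nat.find_spec hex,
          fun z' h1 h2 => Nat.find_min' hex ⟨h1, h2⟩⟩⟩
      · exact hdV (ih hc.2.2 hin s h1 h2 h3)

theorem nxt_mv {p x : ℕ} {V : Set (List ℕ)} {c c' : List ℕ} (hc : Valid p x c) (hcV : c ∈ V)
    (h : Nxt p x V c c') :
    ∃ i j, Mv x c i j ∧ Res c i j c' ∧ ∀ i' j' d, Mv x c i' j' → Valid p x d → Res c i' j' d →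
      d ∉ V → i < i' ∨ (i = i' ∧ j ≤ j') := by
  induction c generalizing x V c' with
  | nil => exact absurd h (by simp [Nxt])
  | cons y r ih =>
    have hlt := hc.2.2.lt
    rcases h with ⟨r', h, rfl⟩ | ⟨hn, z, rfl, ⟨hz, hzV⟩, hmin⟩
    · obtain ⟨i, j, h1, h2, h3⟩ := ih hc.2.2 hcV h
      have hxy := hc.1
      have hi := h1.2.1
      have hj := h1.2.2.1
      refine ⟨i, j, ⟨List.mem_cons_of_mem _ h1.1, by omega, by omega, ?_, ?_⟩, ?_, ?_⟩
      · rw [List.mem_cons, not_or]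
        exact ⟨by omega, h1.2.2.2.1⟩
      · intro t ha hb hcon
        rcases List.mem_cons.1 hcon with rfl | hcon
        · omega
        · exact h1.2.2.2.2 t ha hb hcon
      · intro t
        rw [List.mem_cons, List.mem_cons, h2 t]
        constructor
        · rintro (rfl | h | h)
          · exact Or.inr ⟨by omega, Or.inl rfl⟩
          · exact Or.inl h
          · exact Or.inr ⟨h.1, Or.inr h.2⟩
        · rintro (h | ⟨ha, h | h⟩)
          · exact Or.inr (Or.inl h)
          · exact Or.inl h
          · exact Or.inr (Or.inr ⟨ha, h⟩)
      · intro i' j' d hm hd hr hdV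
        rcases mv_cases hc hm hd hr with ⟨rfl, rfl⟩ | ⟨_, s, rfl, g1, g2, g3⟩
        · exact Or.inl hi
        · exact h3 i' j' s g1 g2 g3 hdV
    · have hzy : z ≠ y := by rintro rfl; exact hzV hcV
      have hlt2 := hz.2.2.lt
      refine ⟨y, z, ⟨by simp, hc.1, hz.1, ?_, ?_⟩, ?_, ?_⟩
      · rw [List.mem_cons, not_or]
        exact ⟨hzy, fun h => lt_irrefl _ (hlt2 z h)⟩
      · intro t ha hb hcon
        rcases List.mem_cons.1 hcon with rfl | hcon
        · omega
        · have := hlt t hcon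
          have := hlt2 t hcon
          omega
      · intro t
        rw [List.mem_cons, List.mem_cons]
        constructor
        · rintro (h | h)
          · exact Or.inl h
          · have := hlt t h
            exact Or.inr ⟨by omega, Or.inr h⟩
        · rintro (h | ⟨ha, h | h⟩)
          · exact Or.inl h
          · exact absurd h ha
          · exact Or.inr h
      · intro i' j' d hm hd hr hdV
        rcases mv_cases hc hm hd hr with ⟨rfl, rfl⟩ | ⟨_, s, rfl, g1, g2, g3⟩
        · exact Or.inr ⟨rfl, hmin j' hd hdV⟩
        · exact absurd (no_nxt_mv hc.2.2 hn i' j' s g1 g2 g3) hdV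

def toW (x : ℕ) (c : List ℕ) : List Bool := (List.range x).map (fun t => decide (t ∈ c))

@[simp] theorem toW_length (x : ℕ) (c : List ℕ) : (toW x c).length = x := by simp [toW]

theorem toW_getD (x : ℕ) (c : List ℕ) (t : ℕ) :
    (toW x c).getD t false = decide (t < x ∧ t ∈ c) := by
  by_cases h : t < x
  · simp [toW, h, List.getD]
  · have : (toW x c).length ≤ t := by simp; omega
    simp [h, List.getD]

theorem list_ext_getD {u v : List Bool} (hl : u.length = v.length)
    (h : ∀ t, t < u.length → u.getD t false = v.getD t false) : u = v := by
  apply List.ext_getElem hl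
  intro t h1 h2
  have := h t h1
  simpa [List.getD, h1, h2] using this

theorem toW_eq_iff {p x : ℕ} {c d : List ℕ} (hc : Valid p x c) (hd : Valid p x d)
    (h : toW x c = toW x d) : c = d := by
  apply hc.ext hd
  intro t
  have h1 := congrArg (fun w => w.getD t false) h
  simp only [toW_getD, decide_eq_decide] at h1
  constructor
  · intro ht; exact (h1.1 ⟨hc.lt t ht, ht⟩).2
  · intro ht; exact (h1.2 ⟨hd.lt t ht, ht⟩).2

theorem okT_iff {p x : ℕ} {c : List ℕ} (hc : Valid p x c) (i j : ℕ) :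
    okT (toW x c) i j ↔ Mv x c i j := by
  have := hc.lt
  unfold okT Mv
  simp only [toW_length, toW_getD, decide_eq_true_eq, decide_eq_false_iff_not, not_and]
  constructor
  · rintro ⟨h1, h2, h3, h4, h5⟩
    exact ⟨h3.2, h1, h2, h4 h2, fun t ha hb => h5 t ha hb (by omega)⟩
  · rintro ⟨h1, h2, h3, h4, h5⟩
    exact ⟨h2, h3, ⟨h2, h1⟩, fun _ => h4, fun t ha hb _ => h5 t ha hb⟩

theorem applyT_getD (w : List Bool) (i j t : ℕ) (ht : t < w.length) :
    (applyT w i j).getD t false = if t = j then true else if t = i then false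
      else w.getD t false := by
  unfold applyT
  simp only [List.getD, List.getElem?_set, List.length_set]
  by_cases h1 : j = t
  · subst h1; simp [ht]
  · have h1' : ¬ t = j := fun h => h1 h.symm
    by_cases h2 : i = t
    · subst h2; simp [ht, h1, h1']
    · have h2' : ¬ t = i := fun h => h2 h.symm
      simp [h1, h2, h1', h2']

theorem res_iff {p x : ℕ} {c d : List ℕ} (hc : Valid p x c) (hd : Valid p x d) (i j : ℕ)
    (hj : j < x) : toW x d = applyT (toW x c) i j ↔ Res c i j d := by
  constructor
  · intro h t
    by_cases ht : t < x
    · have h1 := congrArg (fun w => w.getD t false) h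
      simp only [applyT_getD _ _ _ _ (show t < (toW x c).length by simpa using ht), toW_getD] at h1
      by_cases h2 : t = j
      · simp [h2, hj] at h1 ⊢; exact h1
      · by_cases h3 : t = i
        · subst h3
          simp [h2, ht] at h1 ⊢; exact h1
        · simp [h2, h3, ht] at h1 ⊢; exact h1
    · constructor
      · intro h; exact absurd (hd.lt t h) ht
      · rintro (rfl | ⟨-, h⟩)
        · exact absurd hj ht
        · exact absurd (hc.lt t h) ht
  · intro h
    apply list_ext_getD
    · simp [applyT]
    · intro t ht
      rw [toW_length] at ht
      rw [applyT_getD _ _ _ _ (show t < (toW x c).length by simpa using ht), toW_getD, toW_getD]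
      have h1 := h t
      by_cases h2 : t = j
      · subst h2; simp [ht, h1]
      · by_cases h3 : t = i
        · subst h3; simp [ht, h1, h2]
        · simp [ht, h1, h2, h3]

theorem memC_iff_take (n p k : ℕ) (w : List Bool) : memC n p k w ↔
    w.length = n ∧ w.count true = k ∧ ∀ t, p * (w.take t).count true ≤ (w.take t).count false := by
  unfold memC
  refine and_congr_right fun _ => and_congr_right fun _ => ?_
  constructor
  · intro h t
    exact h _ _ (List.take_append_drop t w).symm
  · rintro h u v rfl
    have := h u.length
    simpa using this

theorem count_add (w : List Bool) : w.count true + w.count false = w.length := by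
  induction w with
  | nil => rfl
  | cons a w ih => cases a <;> simp <;> omega

theorem take_snoc (u : List Bool) (b : Bool) (t : ℕ) :
    (t ≤ u.length ∧ (u ++ [b]).take t = u.take t) ∨
      (u.length < t ∧ (u ++ [b]).take t = u ++ [b]) := by
  rcases Nat.lt_or_ge u.length t with h | h
  · exact Or.inr ⟨h, List.take_of_length_le (by simp; omega)⟩
  · exact Or.inl ⟨h, List.take_append_of_le_length h⟩

theorem memC_snoc_false (n p k : ℕ) (u : List Bool) :
    memC (n + 1) p k (u ++ [false]) ↔ memC n p k u := by
  rw [memC_iff_take, memC_iff_take]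
  simp only [List.length_append, List.length_singleton, Nat.add_right_cancel_iff,
    List.count_append]
  refine and_congr_right fun hl => ?_
  constructor
  · rintro ⟨h1, h2⟩
    refine ⟨by simpa using h1, fun t => ?_⟩
    have h3 := h2 (min t u.length)
    rw [List.take_append_of_le_length (by omega)] at h3
    rcases le_total t u.length with h | h
    · rwa [min_eq_left h] at h3
    · rw [min_eq_right h, List.take_length] at h3
      rwa [List.take_of_length_le h]
  · rintro ⟨h1, h2⟩
    refine ⟨by simpa using h1, fun t => ?_⟩
    rcases take_snoc u false t with ⟨_, h⟩ | ⟨_, h⟩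
    · rw [h]; exact h2 t
    · rw [h]
      have := h2 u.length
      rw [List.take_length] at this
      simp only [List.count_append]
      simp
      omega

theorem memC_snoc_true (n p k : ℕ) (u : List Bool) :
    memC (n + 1) p (k + 1) (u ++ [true]) ↔ memC n p k u ∧ (p + 1) * (k + 1) ≤ n + 1 := by
  rw [memC_iff_take, memC_iff_take]
  have hcu := count_add u
  constructor
  · rintro ⟨h0, h1, h2⟩
    have hl : u.length = n := by simpa using h0
    have hk : u.count true = k := by simpa using h1
    refine ⟨⟨hl, hk, fun t => ?_⟩, ?_⟩
    · have h3 := h2 (min t u.length)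
      rw [List.take_append_of_le_length (by omega)] at h3
      rcases le_total t u.length with h | h
      · rwa [min_eq_left h] at h3
      · rw [min_eq_right h, List.take_length] at h3
        rwa [List.take_of_length_le h]
    · have h3 := h2 (n + 1)
      rw [List.take_of_length_le (by simp [hl])] at h3
      simp [List.count_append, hk] at h3
      nlinarith
  · rintro ⟨⟨hl, hk, h2⟩, h3⟩
    refine ⟨by simp [hl], by simp [hk], fun t => ?_⟩
    rcases take_snoc u true t with ⟨_, h⟩ | ⟨_, h⟩
    · rw [h]; exact h2 t
    · rw [h]
      simp [List.count_append, hk]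
      nlinarith

theorem toW_succ (x : ℕ) (c : List ℕ) : toW (x + 1) c = toW x c ++ [decide (x ∈ c)] := by
  simp [toW, List.range_succ]

theorem toW_cons_self (x : ℕ) (c : List ℕ) : toW x (x :: c) = toW x c := by
  unfold toW
  apply List.map_congr_left
  intro t ht
  have : t ≠ x := by have := List.mem_range.1 ht; omega
  simp [this]

theorem memC_toW {p n k : ℕ} {c : List ℕ} (hc : c ∈ Full p n k) : memC n p k (toW n c) := by
  induction n generalizing c k with
  | zero =>
    obtain ⟨h1, h2⟩ := hc
    cases c with
    | nil =>
      subst h2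
      rw [memC_iff_take]
      simp [toW]
    | cons y r => exact absurd h1.1 (by omega)
  | succ n ih =>
    obtain ⟨h1, h2⟩ := hc
    rw [toW_succ]
    by_cases hn : n ∈ c
    · cases c with
      | nil => simp at hn
      | cons y r =>
        have hy : y = n := by
          rcases List.mem_cons.1 hn with h | h
          · exact h.symm
          · have := h1.2.2.lt _ h
            have := h1.1
            omega
        subst hy
        rw [toW_cons_self, ← h2]
        simp only [List.mem_cons, true_or, decide_true, List.length_cons]
        rw [memC_snoc_true]
        refine ⟨ih ⟨h1.2.2, rfl⟩, ?_⟩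
        have := h1.2.1
        have : (p + 1) * (r.length + 1) = (p + 1) * r.length + (p + 1) := by ring
        omega
    · simp only [hn, decide_false]
      rw [memC_snoc_false]
      apply ih
      refine ⟨?_, h2⟩
      cases c with
      | nil => trivial
      | cons y r =>
        refine ⟨?_, h1.2⟩
        have := h1.1
        have : n ≠ y := by rintro rfl; simp at hn
        omega

theorem exists_toW {p n k : ℕ} {w : List Bool} (hw : memC n p k w) :
    ∃ c ∈ Full p n k, toW n c = w := by
  induction n generalizing w k with
  | zero =>
    have h0 : w = [] := List.length_eq_zero_iff.1 hw.1
    subst h0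
    have hk : 0 = k := hw.2.1
    exact ⟨[], ⟨trivial, hk⟩, rfl⟩
  | succ n ih =>
    rcases List.eq_nil_or_concat' w with rfl | ⟨u, b, rfl⟩
    · exact absurd hw.1 (by simp)
    · cases b with
      | false =>
        rw [memC_snoc_false] at hw
        obtain ⟨c, hc, rfl⟩ := ih hw
        refine ⟨c, ⟨hc.1.mono (by omega), hc.2⟩, ?_⟩
        have : n ∉ c := fun h => lt_irrefl _ (hc.1.lt n h)
        rw [toW_succ]
        simp [this]
      | true =>
        cases k with
        | zero =>
          have := hw.2.1
          simp at this
        | succ k =>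
          rw [memC_snoc_true] at hw
          obtain ⟨c, hc, rfl⟩ := ih hw.1
          have h1 := hw.2
          have h2 : (p + 1) * (k + 1) = (p + 1) * k + (p + 1) := by ring
          refine ⟨n :: c, ⟨⟨by omega, by rw [hc.2]; omega, hc.1⟩, by simp [hc.2]⟩, ?_⟩
          rw [toW_succ, toW_cons_self]
          simp

/-! ### Greedy steps on words -/

def WStep (n p k : ℕ) (σ τ : Set (List Bool) × List Bool) : Prop :=
  (∃ i j, okT σ.2 i j ∧ τ.2 = applyT σ.2 i j ∧ memC n p k τ.2 ∧ τ.2 ∉ σ.1 ∧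
    ∀ i' j', okT σ.2 i' j' → memC n p k (applyT σ.2 i' j') → applyT σ.2 i' j' ∉ σ.1 →
      i < i' ∨ (i = i' ∧ j ≤ j')) ∧ τ.1 = insert τ.2 σ.1

theorem WStep.unique {n p k : ℕ} : Relator.RightUnique (WStep n p k) := by
  rintro ⟨V, w⟩ ⟨V1, w1⟩ ⟨V2, w2⟩ ⟨⟨i, j, h1, h2, h3, h4, h5⟩, h6⟩ ⟨⟨i', j', g1, g2, g3, g4, g5⟩, g6⟩
  simp only at *
  have a := h5 i' j' g1 (g2 ▸ g3) (g2 ▸ g4)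
  have b := g5 i j h1 (h2 ▸ h3) (h2 ▸ h4)
  have hi : i = i' := by omega
  have hj : j = j' := by omega
  subst hi hj
  have : w1 = w2 := by rw [h2, g2]
  subst this
  rw [h6, g6]

theorem wstep_of_rstep {n p k : ℕ} {V V' : Set (List ℕ)} {c c' : List ℕ}
    (hV : V ⊆ Full p n k) (hc : c ∈ V) (h : RStep p n (V, c) (V', c')) :
    WStep n p k (toW n '' V, toW n c) (toW n '' V', toW n c') := by
  obtain ⟨h1, h2⟩ := h
  simp only at h1 h2
  have hcf := hV hc
  obtain ⟨hv', hl', hnV⟩ := nxt_valid hcf.1 h1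
  have hcf' : c' ∈ Full p n k := ⟨hv', hl'.trans hcf.2⟩
  obtain ⟨i, j, hm, hr, hmin⟩ := nxt_mv hcf.1 hc h1
  refine ⟨⟨i, j, (okT_iff hcf.1 i j).2 hm, (res_iff hcf.1 hv' i j hm.2.2.1).2 hr, memC_toW hcf',
    ?_, ?_⟩, ?_⟩
  · rintro ⟨d, hd, hdc⟩
    have := toW_eq_iff (hV hd).1 hv' hdc
    exact hnV (this ▸ hd)
  · intro i' j' hok hmem hnot
    obtain ⟨d, hd, hdw⟩ := exists_toW hmem
    have hm' := (okT_iff hcf.1 i' j').1 hok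
    refine hmin i' j' d hm' hd.1 ((res_iff hcf.1 hd.1 i' j' hm'.2.2.1).1 hdw) ?_
    intro hdV
    exact hnot ⟨d, hdV, hdw⟩
  · simp only
    rw [h2, Set.image_insert_eq]

theorem no_wstep {n p k : ℕ} {V : Set (List ℕ)} {c : List ℕ}
    (hc : c ∈ Full p n k) (h : ¬ ∃ d, Nxt p n V c d) (τ : Set (List Bool) × List Bool) :
    ¬ WStep n p k (toW n '' V, toW n c) τ := by
  rintro ⟨⟨i, j, h1, h2, h3, h4, -⟩, -⟩
  obtain ⟨d, hd, hdw⟩ := exists_toW h3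
  have hm := (okT_iff hc.1 i j).1 h1
  have := no_nxt_mv hc.1 h i j d hm hd.1
    ((res_iff hc.1 hd.1 i j hm.2.2.1).1 (hdw.trans h2))
  exact h4 ⟨d, this, hdw⟩

open Relation in
theorem wrtg_of_rrtg {n p k : ℕ} {σ τ : Set (List ℕ) × List ℕ}
    (h : ReflTransGen (RStep p n) σ τ) (hV : σ.1 ⊆ Full p n k) (hc : σ.2 ∈ σ.1) :
    ReflTransGen (WStep n p k) (toW n '' σ.1, toW n σ.2) (toW n '' τ.1, toW n τ.2) ∧
      τ.1 ⊆ Full p n k ∧ τ.2 ∈ τ.1 := by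
  induction h with
  | refl => exact ⟨ReflTransGen.refl, hV, hc⟩
  | @tail ρ τ _ h2 ih =>
    obtain ⟨i1, i2, i3⟩ := ih
    refine ⟨i1.tail (wstep_of_rstep i2 i3 h2), ?_, ?_⟩
    · rw [h2.2]
      have := nxt_valid (i2 i3).1 h2.1
      rintro d (rfl | hd)
      · exact ⟨this.1, this.2.1.trans (i2 i3).2⟩
      · exact i2 hd
    · rw [h2.2]; exact Or.inl rfl

theorem full_image (p n k : ℕ) : toW n '' Full p n k = {w | memC n p k w} := by
  ext w
  constructor
  · rintro ⟨c, hc, rfl⟩; exact memC_toW hc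
  · intro hw; exact exists_toW hw

open Relation in
theorem isGen_iff {n p k : ℕ} {α : List Bool} : IsGen (memC n p k) α ↔
    memC n p k α ∧ ∃ w, ReflTransGen (WStep n p k) ({α}, α) ({w | memC n p k w}, w) := by
  constructor
  · rintro ⟨hα, L, ⟨h1, h2, h3, h4, h5⟩, h6⟩
    refine ⟨hα, ?_⟩
    have hL : 0 < L.length := List.length_pos_of_mem (h6 α hα)
    have key : ∀ m, m < L.length →
        ReflTransGen (WStep n p k) ({α}, α) ({w | w ∈ L.take (m + 1)}, L.getD m []) := by
      intro m
      induction m with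
      | zero =>
        intro _
        cases L with
        | nil => simp at hL
        | cons a L =>
          simp only [List.head?_cons, Option.some.injEq] at h1
          subst h1
          have : {w | w ∈ (a :: L).take (0 + 1)} = {a} := by ext; simp
          rw [this]
          exact ReflTransGen.refl
      | succ m ih =>
        intro hm
        refine (ih (by omega)).tail ⟨?_, ?_⟩
        · obtain ⟨i, j, g1, g2, g3⟩ := h4 m hm
          have hget : L.getD (m + 1) [] = L[m + 1] := by simp [List.getD, hm]
          refine ⟨i, j, g1, g2, h3 _ ?_, ?_, g3⟩
          · simp only [hget]; exact List.getElem_mem hm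
          · simp only [hget]
            intro hmem
            obtain ⟨q, hq, hqe⟩ := List.mem_iff_getElem.1 hmem
            rw [List.getElem_take] at hqe
            have hq' : q < m + 1 := by
              rw [List.length_take] at hq; omega
            have := (List.Nodup.getElem_inj_iff h2).1 hqe
            omega
        · have hget : L.getD (m + 1) [] = L[m + 1] := by simp [List.getD, hm]
          simp only [hget]
          ext w
          rw [List.take_succ_eq_append_getElem hm]
          simp only [Set.mem_ofPred_eq, List.mem_append, List.mem_singleton, Set.mem_insert_iff]
          exact or_comm
    have := key (L.length - 1) (by omega)
    rw [show L.length - 1 + 1 = L.length by omega, List.take_length] at this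
    have hset : {w | w ∈ L} = {w | memC n p k w} := by
      ext w
      exact ⟨h3 w, h6 w⟩
    rw [hset] at this
    exact ⟨_, this⟩
  · rintro ⟨hα, w, h⟩
    refine ⟨hα, ?_⟩
    have key : ∀ τ, ReflTransGen (WStep n p k) ({α}, α) τ →
        ∃ L : List (List Bool), L ≠ [] ∧ L.head? = some α ∧ L.Nodup ∧ (∀ w ∈ L, memC n p k w) ∧
          (∀ m, m + 1 < L.length →
          ∃ i j, okT (L.getD m []) i j ∧ L.getD (m + 1) [] = applyT (L.getD m []) i j ∧
            ∀ i' j', okT (L.getD m []) i' j' → memC n p k (applyT (L.getD m []) i' j') →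
              applyT (L.getD m []) i' j' ∉ L.take (m + 1) →
              i < i' ∨ (i = i' ∧ j ≤ j')) ∧
          τ.1 = {w | w ∈ L} ∧ τ.2 = L.getD (L.length - 1) [] := by
      intro τ hτ
      induction hτ with
      | refl =>
        refine ⟨[α], by simp, rfl, by simp, by simpa using hα, ?_, by ext; simp, rfl⟩
        intro m hm
        simp at hm
      | @tail ρ τ _ hs ih =>
        obtain ⟨L, g0, g1, g2, g3, g4, g5, g6⟩ := ih
        have hL : 0 < L.length := List.length_pos_of_ne_nil g0
        obtain ⟨⟨i, j, s1, s2, s3, s4, s5⟩, s6⟩ := hs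
        refine ⟨L ++ [τ.2], by simp, ?_, ?_, ?_, ?_, ?_, ?_⟩
        · rw [List.head?_append, g1]; rfl
        · rw [g5] at s4
          rw [List.nodup_append]
          refine ⟨g2, by simp, ?_⟩
          intro a ha b hb
          rw [List.mem_singleton] at hb
          rintro rfl
          exact s4 (hb ▸ ha)
        · intro v hv
          rcases List.mem_append.1 hv with hv | hv
          · exact g3 v hv
          · rw [List.mem_singleton] at hv; rw [hv]; exact s3
        · intro m hm
          rw [List.length_append, List.length_singleton] at hm
          have ha : (L ++ [τ.2]).getD m [] = L.getD m [] :=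
            List.getD_append _ _ _ _ (by omega)
          have hb : (L ++ [τ.2]).take (m + 1) = L.take (m + 1) :=
            List.take_append_of_le_length (by omega)
          rw [ha, hb]
          rcases Nat.lt_or_ge (m + 1) L.length with h | h
          · rw [List.getD_append _ _ _ _ h]
            exact g4 m h
          · have hm' : m = L.length - 1 := by omega
            have hc : (L ++ [τ.2]).getD (m + 1) [] = τ.2 := by
              rw [List.getD_append_right _ _ _ _ h, show m + 1 - L.length = 0 by omega]
              rfl
            rw [hc, List.take_of_length_le h, hm', ← g6]
            rw [g5] at s5
            exact ⟨i, j, s1, s2, s5⟩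
        · rw [s6, g5]
          ext v
          simp [or_comm]
        · rw [List.getD_append_right _ _ _ _ (by simp)]
          simp
    obtain ⟨L, g0, g1, g2, g3, g4, g5, g6⟩ := key _ h
    have hmem : ∀ w, memC n p k w → w ∈ L := by
      intro v hv
      have : v ∈ {w | w ∈ L} := by rw [← g5]; exact hv
      exact this
    exact ⟨L, ⟨g1, g2, g3, g4, fun i j _ hP => hmem _ hP⟩, hmem⟩

open Relation in
theorem isGen_toW {n p k : ℕ} (hp : 1 ≤ p) {c : List ℕ} (hc : c ∈ Full p n k) :
    IsGen (memC n p k) (toW n c) ↔ IsG p n c := by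
  rw [isGen_iff]
  obtain ⟨V, c', h1, h2, h3, h4, h5, h6, h7⟩ := main_all hp k n c hc.1 hc.2
  obtain ⟨w1, w2, w3⟩ := wrtg_of_rrtg h1 (k := k) (by rintro _ rfl; exact hc) rfl
  simp only [Set.image_singleton] at w1
  constructor
  · rintro ⟨-, w, hw⟩
    by_contra hG
    obtain ⟨g1, g2⟩ := h7 hG
    have e : (toW n '' V, toW n c') = ({w | memC n p k w}, w) := by
      rcases ReflTransGen.total_of_right_unique WStep.unique w1 hw with h | h
      · rcases ReflTransGen.cases_head h with h | ⟨τ, h, _⟩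
        · exact h
        · exact absurd h (no_wstep ⟨h3, h4⟩ h5 τ)
      · rcases ReflTransGen.cases_head h with h | ⟨τ, h, _⟩
        · exact h.symm
        · obtain ⟨⟨i, j, _, _, a, b, _⟩, _⟩ := h
          exact absurd a b
    apply g1
    apply Set.Subset.antisymm h2
    intro d hd
    have hd' : toW n d ∈ toW n '' V := by
      have e1 : toW n '' V = {w | memC n p k w} := congrArg Prod.fst e
      rw [e1]; exact memC_toW hd
    obtain ⟨d', hd'V, hdd⟩ := hd'
    rw [← toW_eq_iff (h2 hd'V).1 hd.1 hdd]
    exact hd'V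
  · intro hG
    refine ⟨memC_toW hc, toW n c', ?_⟩
    rw [← full_image, ← (h6 hG).1]
    exact w1

/-! ### Counting the generators -/

def genF (p : ℕ) : ℕ → ℕ → Finset (List ℕ)
  | 0, _ => {[]}
  | k + 1, x => (genF p k ((p + 1) * k + p)).image (fun r => ((p + 1) * k + p) :: r) ∪
      (Finset.Ioo ((p + 1) * k + p) x).image (fun y => run (k + 1) y)

theorem mem_genF {p k x : ℕ} (hx : (p + 1) * k ≤ x) (c : List ℕ) :
    c ∈ genF p k x ↔ IsG p x c ∧ c.length = k := by
  induction k generalizing x c with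
  | zero =>
    simp only [genF, Finset.mem_singleton]
    constructor
    · rintro rfl; exact ⟨trivial, rfl⟩
    · rintro ⟨_, h⟩; exact List.length_eq_zero_iff.1 h
  | succ k ih =>
    have hmul : (p + 1) * (k + 1) = (p + 1) * k + (p + 1) := by ring
    simp only [genF, Finset.mem_union, Finset.mem_image, Finset.mem_Ioo]
    constructor
    · rintro (⟨r, hr, rfl⟩ | ⟨y, hy, rfl⟩)
      · rw [ih (by omega)] at hr
        exact ⟨⟨by omega, Or.inl ⟨by rw [hr.2], hr.1⟩⟩, by simp [hr.2]⟩
      · refine ⟨⟨hy.2, Or.inr ⟨by rw [run_length]; exact hy.1, by simp⟩⟩, by simp⟩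
    · rintro ⟨h1, h2⟩
      cases c with
      | nil => simp at h2
      | cons y r =>
        have hl : r.length = k := by simpa using h2
        obtain ⟨hy, ⟨ha, hb⟩ | ⟨ha, hb⟩⟩ := h1
        · left
          rw [hl] at ha
          subst ha
          exact ⟨r, (ih (by omega) r).2 ⟨hb, hl⟩, rfl⟩
        · right
          rw [hl] at ha hb
          refine ⟨y, ⟨ha, hy⟩, ?_⟩
          rw [hb]; rfl

theorem card_genF {p k x : ℕ} (hx : (p + 1) * (k + 1) ≤ x) :
    (genF p (k + 1) x).card = x + 1 - (k + 1) - p := by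
  induction k generalizing x with
  | zero =>
    rw [genF, Finset.card_union_of_disjoint, Finset.card_image_of_injective,
      Finset.card_image_of_injective]
    · simp [genF]; omega
    · intro a b h; simpa [run] using h
    · intro a b h; simpa using h
    · rw [Finset.disjoint_left]
      intro c h1 h2
      simp only [Finset.mem_image, Finset.mem_Ioo] at h1 h2
      obtain ⟨r, _, rfl⟩ := h1
      obtain ⟨y, hy, h⟩ := h2
      simp only [run, List.cons.injEq] at h
      omega
  | succ k ih =>
    have hmul : (p + 1) * (k + 1) = (p + 1) * k + (p + 1) := by ring
    have hmul2 : (p + 1) * (k + 1 + 1) = (p + 1) * (k + 1) + (p + 1) := by ring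
    have hmul3 : (p + 1) * k = p * k + k := by ring
    rw [genF, Finset.card_union_of_disjoint, Finset.card_image_of_injective,
      Finset.card_image_of_injective, ih (by omega), Nat.card_Ioo]
    · omega
    · intro a b h; simp only [run, List.cons.injEq] at h; exact h.1
    · intro a b h; simpa using h
    · rw [Finset.disjoint_left]
      intro c h1 h2
      simp only [Finset.mem_image, Finset.mem_Ioo] at h1 h2
      obtain ⟨r, _, rfl⟩ := h1
      obtain ⟨y, hy, h⟩ := h2
      simp only [run, List.cons.injEq] at h
      omega

theorem card_gen_p (n p k : ℕ) (hp : 1 ≤ p) (hk : 1 ≤ k) (hn : (p + 1) * k ≤ n) :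
    Nat.card {α : List Bool | IsGen (memC n p k) α} = n + 1 - k - p := by
  have hset : {α : List Bool | IsGen (memC n p k) α} = toW n '' (genF p k n : Set (List ℕ)) := by
    ext α
    constructor
    · intro h
      obtain ⟨c, hc, rfl⟩ := exists_toW h.1
      exact ⟨c, (mem_genF hn c).2 ⟨(isGen_toW hp hc).1 h, hc.2⟩, rfl⟩
    · rintro ⟨c, hc, rfl⟩
      obtain ⟨h1, h2⟩ := (mem_genF hn c).1 hc
      exact (isGen_toW hp ⟨h1.valid hp, h2⟩).2 h1
  have hinj : Set.InjOn (toW n) (genF p k n : Set (List ℕ)) := by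
    intro c hc d hd h
    exact toW_eq_iff (((mem_genF hn c).1 hc).1.valid hp) (((mem_genF hn d).1 hd).1.valid hp) h
  rw [hset, Nat.card_image_of_injOn hinj]
  obtain ⟨k, rfl⟩ : ∃ j, k = j + 1 := ⟨k - 1, by omega⟩
  rw [← card_genF hn]
  simp
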